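/- arXiv:1401.5347 — 3 statements merged into one kernel-verified Lean document; each statement's English description precedes it below -/
import Mathlib

section
/- Completeness of the or-to-plus method (Theorem 1): Let P = (τ_stem, τ_loop) be a linear lasso program over ℝⁿ such that the relational composition τ_stem ∘ τ_loop is nonempty (i.e., there exist x₀, x₁, x₂ ∈ ℝⁿ with (x₀,x₁) ∈ τ_stem and (x₁,x₂) ∈ τ_loop). If there exist r̊ ∈ ℝⁿ, r̊₀ ∈ ℝ, s̊ ∈ ℝⁿ, s̊₀ ∈ ℝ such that f(x) = r̊ᵀx + r̊₀ is a linear ranking function with linear supporting invariant I(x) ≡ s̊ᵀx + s̊₀ ≥ 0 for P and this invariant is non-decreasing, then there exist r ∈ ℝⁿ, r₀ ∈ ℝ, s ∈ ℝⁿ, s₀ ∈ ℝ satisfying the or-to-plus constraints (φ1), (φ2), (φ3), (φ4) for P. -/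
open Matrix

/-!
The witness is `s = μ • shat` and `r = rhat - ν • shat` with constants to match, where `μ, ν ≥ 0`
come from the affine form of Farkas' lemma. It replaces "`G ≥ 0` implies `H ≥ 0` on the polyhedron
`τloop`" by the single inequality `H ≥ μ G`, provided that some point of `τloop` satisfies `G ≥ 0`;
the run through stem and loop is such a point. The decrease of the new `r` survives the subtraction
of `ν • shat` because the invariant is non-decreasing.
-/

section Pairing

variable {K M N : Type*} [CommRing K] [PartialOrder K] [IsOrderedRing K]
  [AddCommGroup M] [Module K M] [AddCommGroup N] [Module K N] {p : M →ₗ[K] N →ₗ[K] K}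

lemma eq_zero_of_forall_nonneg {φ : Module.Dual K N} (hφ : ∀ x, 0 ≤ φ x) : φ = 0 := by
  ext x
  have hneg := hφ (-x)
  rw [map_neg, Left.nonneg_neg_iff] at hneg
  exact le_antisymm hneg (hφ x)

lemma apply_nonneg_of_mem_hull {s : Set M} {m : M} (hm : m ∈ PointedCone.hull K s) {x : N}
    (hx : ∀ a ∈ s, 0 ≤ p a x) : 0 ≤ p m x := by
  have hx' : x ∈ PointedCone.dual p (PointedCone.hull K s : Set M) := by
    rw [PointedCone.dual_hull]
    exact fun a ha ↦ hx a ha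
  exact hx' hm

lemma hull_image_add_smul_le {s : Set M} {a : M} {c : M → K} (hc : ∀ b ∈ s, 0 ≤ c b) :
    PointedCone.hull K ((fun b ↦ b + c b • a) '' s) ≤ PointedCone.hull K (insert a s) := by
  refine Submodule.span_le.2 ?_
  rintro _ ⟨b, hb, rfl⟩
  exact add_mem (Submodule.subset_span (Set.mem_insert_of_mem _ hb))
    (PointedCone.smul_mem _ (hc b hb) (Submodule.subset_span (Set.mem_insert _ _)))

end Pairing

section Farkas

variable {K M N ι : Type*} [Field K] [LinearOrder K] [IsStrictOrderedRing K]
  [AddCommGroup M] [Module K M] [AddCommGroup N] [Module K N] {p : M →ₗ[K] N →ₗ[K] K}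

lemma exists_apply_eq_neg_one {s : Set M} {a h : M}
    (hins : ∀ x, (∀ b ∈ insert a s, 0 ≤ p b x) → 0 ≤ p h x)
    (hs : ¬ ∀ x, (∀ b ∈ s, 0 ≤ p b x) → 0 ≤ p h x) :
    ∃ y, (∀ b ∈ s, 0 ≤ p b y) ∧ p h y < 0 ∧ p a y = -1 := by
  push Not at hs
  obtain ⟨z, hz, hhz⟩ := hs
  have haz : p a z < 0 := by
    by_contra! haz
    exact hhz.not_ge (hins z (Set.forall_mem_insert.2 ⟨haz, hz⟩))
  have hc : 0 < (-(p a z))⁻¹ := inv_pos.2 (neg_pos.2 haz)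
  refine ⟨(-(p a z))⁻¹ • z, fun b hb ↦ ?_, ?_, ?_⟩
  · simpa only [map_smul] using smul_nonneg hc.le (hz b hb)
  · simpa only [map_smul] using smul_neg_of_pos_of_neg hc hhz
  · rw [map_smul, smul_eq_mul, inv_neg, neg_mul, inv_mul_cancel₀ haz.ne]

/- Farkas' lemma by elimination: to remove the constraint `a`, pick `y` with `p a y = -1` and send
each `b` to `b + p b y • a`, whose functional is that of `b` precomposed with the projection along
`y` onto the kernel of `p a`. -/
theorem mem_hull_image_of_forall_nonneg (hp : Function.Injective p) {s : Set ι} (hs : s.Finite)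
    (a : ι → M) (h : M) (hnonneg : ∀ x, (∀ b ∈ a '' s, 0 ≤ p b x) → 0 ≤ p h x) :
    h ∈ PointedCone.hull K (a '' s) := by
  induction s, hs using Set.Finite.induction_on generalizing a h with
  | empty =>
    have hph : p h = 0 := eq_zero_of_forall_nonneg fun x ↦ hnonneg x (by simp)
    rw [(map_eq_zero_iff p hp).1 hph]
    exact zero_mem _
  | @insert i s _ _ ih =>
    rw [Set.image_insert_eq] at hnonneg ⊢
    by_cases hredundant : ∀ x, (∀ b ∈ a '' s, 0 ≤ p b x) → 0 ≤ p h x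
    · exact Submodule.span_mono (Set.subset_insert _ _) (ih a h hredundant)
    obtain ⟨y, hy, hhy, hay⟩ := exists_apply_eq_neg_one hnonneg hredundant
    have hproj (b : M) (x : N) : p (b + p b y • a i) x = p b (x + p (a i) x • y) := by
      simp [mul_comm]
    have hmem : h + p h y • a i ∈ PointedCone.hull K ((fun j ↦ a j + p (a j) y • a i) '' s) := by
      refine ih _ _ fun x hx ↦ ?_
      rw [hproj]
      refine hnonneg _ (Set.forall_mem_insert.2 ⟨by simp [hay], ?_⟩)
      rintro _ ⟨j, hj, rfl⟩
      rw [← hproj]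
      exact hx _ ⟨j, hj, rfl⟩
    rw [← Set.image_image (fun b ↦ b + p b y • a i)] at hmem
    have hsplit : h = h + p h y • a i + (-p h y) • a i := by module
    rw [hsplit]
    exact add_mem (hull_image_add_smul_le hy hmem)
      (PointedCone.smul_mem _ (neg_nonneg.2 hhy.le) (Submodule.subset_span (Set.mem_insert _ _)))

end Farkas

section Homogenization

variable {K E : Type*} [CommRing K] [AddCommGroup E] [Module K E]

/-- The pairing of affine functions on `E` with `E × K` that extends evaluation on the slice
`E × {1}` linearly; it reduces affine inequalities to linear ones. -/
def homogenize : (E →ᵃ[K] K) →ₗ[K] E × K →ₗ[K] K where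
  toFun f := f.linear.coprod (LinearMap.toSpanSingleton K K (f 0))
  map_add' f g := by ext <;> simp
  map_smul' c f := by ext <;> simp

lemma homogenize_apply (f : E →ᵃ[K] K) (z : E × K) :
    homogenize f z = f.linear z.1 + z.2 * f 0 := rfl

lemma homogenize_apply_one (f : E →ᵃ[K] K) (x : E) : homogenize f (x, 1) = f x := by
  rw [homogenize_apply, one_mul]
  exact (congrFun f.decomp x).symm

lemma homogenize_injective : Function.Injective (homogenize (K := K) (E := E)) := by
  intro f g hfg
  ext x
  rw [← homogenize_apply_one, hfg, homogenize_apply_one]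

end Homogenization

lemma homogenize_apply_eq_mul {K E : Type*} [Field K] [AddCommGroup E] [Module K E] (f : E →ᵃ[K] K)
    {z : E × K} (hz : z.2 ≠ 0) : homogenize f z = z.2 * f (z.2⁻¹ • z.1) := by
  have hscale : z = z.2 • (z.2⁻¹ • z.1, (1 : K)) := by
    ext <;> simp [hz]
  conv_lhs => rw [hscale, map_smul, homogenize_apply_one, smul_eq_mul]

section Polyhedra

variable {K E : Type*} [Field K] [LinearOrder K] [IsStrictOrderedRing K]
  [AddCommGroup E] [Module K E]

lemma nonneg_of_forall_nonneg_mul_add {A B : K} (h : ∀ k, 0 ≤ k → 0 ≤ k * A + B) : 0 ≤ A := by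
  by_contra! hA
  have hB : 0 ≤ B := by simpa using h 0 le_rfl
  have hk := h ((B + 1) / -A) (div_nonneg (by linarith) (by linarith))
  rw [div_neg, neg_mul, div_mul_cancel₀ _ hA.ne] at hk
  linarith

lemma homogenize_nonneg {s : Set (E →ᵃ[K] K)} {h : E →ᵃ[K] K} {x₀ : E} (hx₀ : ∀ f ∈ s, 0 ≤ f x₀)
    (hnonneg : ∀ x, (∀ f ∈ s, 0 ≤ f x) → 0 ≤ h x) {z : E × K} (hz₂ : 0 ≤ z.2)
    (hz : ∀ f ∈ s, 0 ≤ homogenize f z) : 0 ≤ homogenize h z := by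
  have hray (f : E →ᵃ[K] K) (k : K) :
      homogenize f (k • z + (x₀, 1)) = k * homogenize f z + f x₀ := by
    rw [map_add, map_smul, homogenize_apply_one, smul_eq_mul]
  refine nonneg_of_forall_nonneg_mul_add (B := h x₀) fun k hk ↦ ?_
  have hpos : 0 < (k • z + (x₀, 1)).2 := add_pos_of_nonneg_of_pos (mul_nonneg hk hz₂) one_pos
  rw [← hray, homogenize_apply_eq_mul h hpos.ne']
  refine mul_nonneg hpos.le (hnonneg _ fun f hf ↦ ?_)
  rw [← mul_nonneg_iff_of_pos_left hpos, ← homogenize_apply_eq_mul f hpos.ne', hray]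
  exact add_nonneg (mul_nonneg hk (hz f hf)) (hx₀ f hf)

theorem affine_mem_hull_of_forall_nonneg {s : Set (E →ᵃ[K] K)} (hs : s.Finite) {h : E →ᵃ[K] K}
    (hfeasible : ∃ x, ∀ f ∈ s, 0 ≤ f x) (hnonneg : ∀ x, (∀ f ∈ s, 0 ≤ f x) → 0 ≤ h x) :
    h ∈ PointedCone.hull K (insert (AffineMap.const K E 1) s) := by
  obtain ⟨x₀, hx₀⟩ := hfeasible
  rw [← Set.image_id (insert _ s)]
  refine mem_hull_image_of_forall_nonneg homogenize_injective (hs.insert _) id h fun z hz ↦ ?_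
  rw [Set.image_id, Set.forall_mem_insert] at hz
  exact homogenize_nonneg hx₀ hnonneg (by simpa [homogenize_apply] using hz.1) hz.2

variable (K) in
/-- A polyhedron: the solution set of finitely many affine inequalities. No topology and no
finite-dimensionality of the ambient space is assumed. -/
def IsPolyhedron (P : Set E) : Prop :=
  ∃ s : Set (E →ᵃ[K] K), s.Finite ∧ P = {x | ∀ f ∈ s, 0 ≤ f x}

theorem IsPolyhedron.exists_mul_le {P : Set E} (hP : IsPolyhedron K P) {g h : E →ᵃ[K] K}
    (hfeasible : ∃ x ∈ P, 0 ≤ g x) (hnonneg : ∀ x ∈ P, 0 ≤ g x → 0 ≤ h x) :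
    ∃ μ : K, 0 ≤ μ ∧ ∀ x ∈ P, μ * g x ≤ h x := by
  obtain ⟨s, hs, rfl⟩ := hP
  obtain ⟨x₀, hx₀, hgx₀⟩ := hfeasible
  have hmem : h ∈ PointedCone.hull K (insert (AffineMap.const K E 1) (insert g s)) :=
    affine_mem_hull_of_forall_nonneg (hs.insert g) ⟨x₀, Set.forall_mem_insert.2 ⟨hgx₀, hx₀⟩⟩
      fun x hx ↦ hnonneg x (Set.forall_mem_insert.1 hx).2 (Set.forall_mem_insert.1 hx).1
  rw [Set.insert_comm] at hmem
  obtain ⟨⟨μ, hμ⟩, f, hf, rfl⟩ := Submodule.mem_span_insert.1 hmem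
  refine ⟨μ, hμ, fun x hx ↦ le_add_of_nonneg_right ?_⟩
  rw [← homogenize_apply_one]
  refine apply_nonneg_of_mem_hull hf (Set.forall_mem_insert.2 ⟨?_, fun f' hf' ↦ ?_⟩)
  · simp [homogenize_apply_one]
  · simpa only [homogenize_apply_one] using hx f' hf'

lemma isPolyhedron_mulVec_append_le {m k l : ℕ} (A : Matrix (Fin m) (Fin (k + l)) K)
    (b : Fin m → K) :
    IsPolyhedron K {z : (Fin k → K) × (Fin l → K) | A *ᵥ Fin.append z.1 z.2 ≤ b} := by
  let row (i : Fin m) : (Fin k → K) × (Fin l → K) →ₗ[K] K :=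
    (dotProductBilin K K fun j ↦ A i (Fin.castAdd l j)).coprod
      (dotProductBilin K K fun j ↦ A i (Fin.natAdd k j))
  have hrow (i : Fin m) (z) : row i z = (A *ᵥ Fin.append z.1 z.2) i := by
    simp [row, mulVec, dotProduct, Fin.sum_univ_add]
  refine ⟨Set.range fun i ↦ AffineMap.const K _ (b i) - (row i).toAffineMap,
    Set.finite_range _, ?_⟩
  ext z
  simp [Pi.le_def, hrow]

end Polyhedra

theorem or_to_plus_completeness_general {K V : Type*} [Field K] [LinearOrder K]
    [IsStrictOrderedRing K] [AddCommGroup V] [Module K V] (τstem τloop : V → V → Prop)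
    (hloop : IsPolyhedron K {z : V × V | τloop z.1 z.2})
    (hne : ∃ x₀ x₁ x₂, τstem x₀ x₁ ∧ τloop x₁ x₂)
    (rhat : Module.Dual K V) (rhat₀ : K) (shat : Module.Dual K V) (shat₀ : K)
    (hinvStem : ∀ x x', τstem x x' → shat x' + shat₀ ≥ 0)
    (hrkDecr : ∃ δ > (0 : K), ∀ x x', shat x + shat₀ ≥ 0 → τloop x x' → rhat x - rhat x' ≥ δ)
    (hrkBound : ∀ x x', shat x + shat₀ ≥ 0 → τloop x x' → rhat x + rhat₀ ≥ 0)
    (hnondecr : ∀ x x', τloop x x' → shat x' ≥ shat x) :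
    ∃ (r : Module.Dual K V) (r₀ : K) (s : Module.Dual K V) (s₀ : K),
      (∀ x x', τstem x x' → s x' + s₀ ≥ 0) ∧
      (∀ x x', τloop x x' → s x' - s x ≥ 0) ∧
      (∃ δ > (0 : K), ∀ x x', τloop x x' → r x - r x' - s x - s₀ ≥ δ) ∧
      (∀ x x', τloop x x' → r x + r₀ ≥ 0) := by
  obtain ⟨x₀, x₁, x₂, hx₁, hx₂⟩ := hne
  obtain ⟨δ, hδ, hdecr⟩ := hrkDecr
  let invariant : V × V →ᵃ[K] K := (shat ∘ₗ .fst K V V).toAffineMap + .const K _ shat₀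
  let decr : V × V →ᵃ[K] K :=
    (rhat ∘ₗ .fst K V V - rhat ∘ₗ .snd K V V).toAffineMap - .const K _ δ
  let rank : V × V →ᵃ[K] K := (rhat ∘ₗ .fst K V V).toAffineMap + .const K _ rhat₀
  have hfeasible : ∃ z ∈ {z : V × V | τloop z.1 z.2}, 0 ≤ invariant z :=
    ⟨(x₁, x₂), hx₂, hinvStem x₀ x₁ hx₁⟩
  obtain ⟨μ, hμ, hμdecr⟩ := hloop.exists_mul_le (h := decr) hfeasible
    fun z hz hinv ↦ sub_nonneg.2 (hdecr z.1 z.2 hinv hz)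
  obtain ⟨ν, hν, hνrank⟩ := hloop.exists_mul_le (h := rank) hfeasible
    fun z hz hinv ↦ hrkBound z.1 z.2 hinv hz
  refine ⟨rhat - ν • shat, rhat₀ - ν * shat₀, μ • shat, μ * shat₀,
    fun x x' h ↦ ?_, fun x x' h ↦ ?_, ⟨δ, hδ, fun x x' h ↦ ?_⟩, fun x x' h ↦ ?_⟩ <;>
    simp only [LinearMap.sub_apply, LinearMap.smul_apply, smul_eq_mul]
  · linear_combination mul_nonneg hμ (hinvStem x x' h)
  · linear_combination mul_le_mul_of_nonneg_left (hnondecr x x' h) hμ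
  · have hμle : μ * (shat x + shat₀) ≤ rhat x - rhat x' - δ := hμdecr (x, x') h
    linear_combination hμle + mul_le_mul_of_nonneg_left (hnondecr x x' h) hν
  · have hνle : ν * (shat x + shat₀) ≤ rhat x + rhat₀ := hνrank (x, x') h
    linear_combination hνle

/-- Completeness of the or-to-plus method (Theorem 1). -/
theorem or_to_plus_completeness {n ms ml : ℕ}
    (Astem : Matrix (Fin ms) (Fin (n + n)) ℝ) (bstem : Fin ms → ℝ)
    (Aloop : Matrix (Fin ml) (Fin (n + n)) ℝ) (bloop : Fin ml → ℝ)
    (τstem τloop : (Fin n → ℝ) → (Fin n → ℝ) → Prop)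
    (hstem : ∀ x x', τstem x x' ↔ Astem.mulVec (Fin.append x x') ≤ bstem)
    (hloop : ∀ x x', τloop x x' ↔ Aloop.mulVec (Fin.append x x') ≤ bloop)
    (hne : ∃ x₀ x₁ x₂, τstem x₀ x₁ ∧ τloop x₁ x₂)
    (rhat : Fin n → ℝ) (rhat₀ : ℝ) (shat : Fin n → ℝ) (shat₀ : ℝ)
    (hinvStem : ∀ x x', τstem x x' → shat ⬝ᵥ x' + shat₀ ≥ 0)
    (hinvLoop : ∀ x x', shat ⬝ᵥ x + shat₀ ≥ 0 → τloop x x' → shat ⬝ᵥ x' + shat₀ ≥ 0)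
    (hrkDecr : ∃ δ > (0 : ℝ), ∀ x x', shat ⬝ᵥ x + shat₀ ≥ 0 → τloop x x' →
      rhat ⬝ᵥ x - rhat ⬝ᵥ x' ≥ δ)
    (hrkBound : ∀ x x', shat ⬝ᵥ x + shat₀ ≥ 0 → τloop x x' → rhat ⬝ᵥ x + rhat₀ ≥ 0)
    (hnondecr : ∀ x x', τloop x x' → shat ⬝ᵥ x' ≥ shat ⬝ᵥ x) :
    ∃ (r : Fin n → ℝ) (r₀ : ℝ) (s : Fin n → ℝ) (s₀ : ℝ),
      (∀ x x', τstem x x' → s ⬝ᵥ x' + s₀ ≥ 0) ∧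
      (∀ x x', τloop x x' → s ⬝ᵥ x' - s ⬝ᵥ x ≥ 0) ∧
      (∃ δ > (0 : ℝ), ∀ x x', τloop x x' →
        r ⬝ᵥ x - r ⬝ᵥ x' - s ⬝ᵥ x - s₀ ≥ δ) ∧
      (∀ x x', τloop x x' → r ⬝ᵥ x + r₀ ≥ 0) := by
  simpa only [(dotProductEquiv ℝ (Fin n)).surjective.exists, dotProductEquiv_apply_apply] using
    or_to_plus_completeness_general τstem τloop
      (by simpa only [hloop] using isPolyhedron_mulVec_append_le Aloop bloop) hne
      (dotProductEquiv ℝ (Fin n) rhat) rhat₀ (dotProductEquiv ℝ (Fin n) shat) shat₀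
      hinvStem hrkDecr hrkBound hnondecr
end

section
/- Half-space rotation lemma (Lemma 1): Let A be a real m×n matrix and b ∈ ℝᵐ such that the system A·x ≤ b is satisfiable, and let g, h ∈ ℝⁿ and g₀, h₀ ∈ ℝ. Suppose (i) it is NOT the case that every x ∈ ℝⁿ with A·x ≤ b satisfies hᵀx + h₀ > 0, and (ii) every x ∈ ℝⁿ with A·x ≤ b satisfies gᵀx + g₀ ≥ 0 or hᵀx + h₀ > 0. Then there exists a constant μ ≥ 0 such that every x ∈ ℝⁿ with A·x ≤ b satisfies (gᵀx + g₀) + μ·(hᵀx + h₀) ≥ 0. -/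
open Matrix

/-!
By hypothesis `g` is nonnegative on the nonempty polyhedron cut out by `A x ≤ b` and `h x ≤ 0`, so
the affine Farkas lemma (`mem_hull_insert_one_of_forall_nonneg`) writes `g` as a nonnegative
combination of `1`, the `b i - (A x) i` and `-h`. The coefficient of `-h` is `μ`: the rest of the
combination equals `g + μ h` and is nonnegative wherever `A x ≤ b`.

Homogenizing at a feasible point reduces the affine Farkas lemma to the bipolar theorem for finitely
generated cones. Eliminating one generator at a time proves the latter over any ordered field, with
no topological closedness argument.
-/

open PointedCone

section AffineFunctionals

variable {R V P : Type*} [CommRing R] [AddCommGroup V] [Module R V] [AddTorsor V P]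

/-- The homogenization of affine functionals on `P` based at `x₀`, as a linear map: the point
`v +ᵥ x₀` of `P` corresponds to `(v, 1)`. -/
def homogenization (x₀ : P) : (P →ᵃ[R] R) →ₗ[R] V × R →ₗ[R] R where
  toFun f := f.linear.coprod (f x₀ • LinearMap.id)
  map_add' f g := by ext <;> simp
  map_smul' r f := by ext <;> simp

theorem homogenization_apply (x₀ : P) (f : P →ᵃ[R] R) (v : V) (t : R) :
    homogenization x₀ f (v, t) = f.linear v + f x₀ * t := rfl

theorem homogenization_smul_self (x₀ : P) (f : P →ᵃ[R] R) (v : V) (t : R) :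
    homogenization x₀ f (t • v, t) = t * f (v +ᵥ x₀) := by
  rw [homogenization_apply, f.map_vadd, map_smul, vadd_eq_add, smul_eq_mul]
  ring

theorem homogenization_injective (x₀ : P) : Function.Injective (homogenization (R := R) x₀) := by
  intro f g hfg
  have happly (v : V) (t : R) : f.linear v + f x₀ * t = g.linear v + g x₀ * t :=
    LinearMap.congr_fun hfg (v, t)
  refine AffineMap.ext_linear (LinearMap.ext fun v ↦ ?_) (p := x₀) ?_
  · simpa using happly v 0
  · simpa using happly 0 1

theorem nonneg_of_mem_hull [PartialOrder R] [IsOrderedRing R] {s : Set (P →ᵃ[R] R)} {x : P}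
    (hx : ∀ f ∈ s, 0 ≤ f x) {g : P →ᵃ[R] R} (hg : g ∈ hull R s) : 0 ≤ g x := by
  induction hg using Submodule.span_induction with
  | mem f hf => exact hx f hf
  | zero => exact le_rfl
  | add f₁ f₂ _ _ h₁ h₂ => exact add_nonneg h₁ h₂
  | smul r f _ hf => exact mul_nonneg r.2 hf

end AffineFunctionals

section Elimination

variable {𝕜 M N : Type*} [Field 𝕜] [AddCommGroup M] [Module 𝕜 M] [AddCommGroup N] [Module 𝕜 N]

/-- The pairing `p` precomposed, in its second argument, with the projection onto the kernel of
`p a` along `z`. It eliminates the generator `a` in the bipolar theorem; when `p a z = 0`,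
the junk value `(p a z)⁻¹ = 0` makes it equal to `p`. -/
def elimination (p : M →ₗ[𝕜] N →ₗ[𝕜] 𝕜) (a : M) (z : N) : M →ₗ[𝕜] N →ₗ[𝕜] 𝕜 :=
  p.compl₂ (LinearMap.id - ((p a z)⁻¹ • p a).smulRight z)

theorem elimination_apply (p : M →ₗ[𝕜] N →ₗ[𝕜] 𝕜) (a f : M) (y z : N) :
    elimination p a z f y = p f (y - ((p a z)⁻¹ * p a y) • z) := rfl

end Elimination

section OrderedField

variable {𝕜 : Type*} [Field 𝕜] [LinearOrder 𝕜] [IsStrictOrderedRing 𝕜]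

theorem nonneg_of_forall_pos_nonneg_add_mul {a b : 𝕜} (h : ∀ ε > 0, 0 ≤ a + ε * b) : 0 ≤ a := by
  by_contra! ha
  have hb : 0 < b := by linarith [h 1 one_pos]
  have hε := h (-a / (2 * b)) (div_pos (neg_pos.2 ha) (by positivity))
  have : -a / (2 * b) * b = -a / 2 := by field_simp
  linarith

section BipolarTheorem

variable {M N : Type*} [AddCommGroup M] [Module 𝕜 M] [AddCommGroup N] [Module 𝕜 N]

theorem mem_dual_dual_elimination (p : M →ₗ[𝕜] N →ₗ[𝕜] 𝕜) {s : Set M} {a c : M} {z : N}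
    (haz : p a z ≠ 0) (hc : c ∈ dual p.flip (dual p (insert a s))) :
    c ∈ dual (elimination p a z).flip (dual (elimination p a z) s) := by
  intro y hy
  rw [LinearMap.flip_apply, elimination_apply]
  refine hc ?_
  rintro f (rfl | hf)
  · have hproj : p f (y - ((p f z)⁻¹ * p f y) • z) = 0 := by simp [mul_right_comm, haz]
    exact hproj.ge
  · exact hy hf

theorem exists_mem_hull_map_eq_of_mem_dual_dual {s : Set M} (hs : s.Finite)
    (p : M →ₗ[𝕜] N →ₗ[𝕜] 𝕜) {c : M} (hc : c ∈ dual p.flip (dual p s)) :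
    ∃ c' ∈ hull 𝕜 s, p c' = p c := by
  induction s, hs using Set.Finite.induction_on generalizing p with
  | empty =>
    have hpc : p c ∈ dual (Module.Dual.eval 𝕜 N) Set.univ := fun y _ ↦ hc (by simp)
    have heval : Function.Injective (Module.Dual.eval 𝕜 N).flip := Function.injective_id
    rw [dual_univ heval] at hpc
    exact ⟨0, zero_mem _, by rw [map_zero, (Submodule.mem_bot _).1 hpc]⟩
  | @insert a s _ _ ih =>
    by_cases hcs : c ∈ dual p.flip (dual p s)
    · obtain ⟨c', hc', hpc'⟩ := ih p hcs
      exact ⟨c', Submodule.span_mono (Set.subset_insert a s) hc', hpc'⟩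
    obtain ⟨z, hz, hcz⟩ : ∃ z ∈ dual p s, p c z < 0 := by simpa using hcs
    have haz : p a z < 0 := by
      by_contra! haz
      exact hcz.not_ge (hc (by simpa [haz] using hz))
    obtain ⟨c', hc', helim⟩ := ih _ (mem_dual_dual_elimination p haz.ne hc)
    have hc'z : 0 ≤ p c' z := by
      rw [← dual_hull] at hz
      exact hz hc'
    have hcoeff : 0 ≤ (p c z - p c' z) / p a z :=
      div_nonneg_of_nonpos (by linarith) haz.le
    refine ⟨((p c z - p c' z) / p a z) • a + c', ?_, LinearMap.ext fun y ↦ ?_⟩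
    · exact Submodule.mem_span_insert.2 ⟨⟨_, hcoeff⟩, c', hc', rfl⟩
    · have helimy := LinearMap.congr_fun helim y
      simp only [elimination_apply, map_sub, map_smul, smul_eq_mul] at helimy
      simp only [map_add, map_smul, LinearMap.add_apply, LinearMap.smul_apply, smul_eq_mul]
      linear_combination helimy

theorem dual_flip_dual_eq_hull_of_finite {s : Set M} (hs : s.Finite) {p : M →ₗ[𝕜] N →ₗ[𝕜] 𝕜}
    (hp : Function.Injective p) : dual p.flip (dual p s) = hull 𝕜 s := by
  refine le_antisymm (fun c hc ↦ ?_) (Submodule.span_le.2 subset_dual_dual)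
  obtain ⟨c', hc', hpc⟩ := exists_mem_hull_map_eq_of_mem_dual_dual hs p hc
  exact hp hpc ▸ hc'

end BipolarTheorem

section AffineFarkas

variable {V P : Type*} [AddCommGroup V] [Module 𝕜 V] [AddTorsor V P]

theorem mem_hull_insert_one_of_forall_nonneg {s : Set (P →ᵃ[𝕜] 𝕜)} (hs : s.Finite)
    (hsat : ∃ x, ∀ f ∈ s, 0 ≤ f x) {g : P →ᵃ[𝕜] 𝕜} (hg : ∀ x, (∀ f ∈ s, 0 ≤ f x) → 0 ≤ g x) :
    g ∈ hull 𝕜 (insert (AffineMap.const 𝕜 P 1) s) := by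
  obtain ⟨x₀, hx₀⟩ := hsat
  rw [← dual_flip_dual_eq_hull_of_finite (hs.insert _) (homogenization_injective x₀)]
  rintro ⟨v, t⟩ hvt
  have ht : 0 ≤ t := by
    simpa [homogenization_apply] using hvt (Set.mem_insert (AffineMap.const 𝕜 P 1) s)
  -- Moving towards `(0, 1)`, which satisfies the constraints by the choice of `x₀`, makes `t > 0`.
  refine nonneg_of_forall_pos_nonneg_add_mul (b := g x₀) fun ε hε ↦ ?_
  have htε : 0 < t + ε := by positivity
  have hshift (f : P →ᵃ[𝕜] 𝕜) : homogenization x₀ f (v, t) + ε * f x₀ =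
      (t + ε) * f ((t + ε)⁻¹ • v +ᵥ x₀) := by
    rw [← homogenization_smul_self, smul_inv_smul₀ htε.ne', homogenization_apply,
      homogenization_apply]
    ring
  have hfeasible : ∀ f ∈ s, 0 ≤ f ((t + ε)⁻¹ • v +ᵥ x₀) := fun f hf ↦ by
    refine nonneg_of_mul_nonneg_right ?_ htε
    rw [← hshift]
    exact add_nonneg (hvt (Set.mem_insert_of_mem _ hf)) (mul_nonneg hε.le (hx₀ f hf))
  rw [LinearMap.flip_apply, hshift]
  exact mul_nonneg htε.le (hg _ hfeasible)

theorem exists_nonneg_multiplier_of_finite {s : Set (P →ᵃ[𝕜] 𝕜)} (hs : s.Finite) {g h : P →ᵃ[𝕜] 𝕜}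
    (hsat : ∃ x, (∀ f ∈ s, 0 ≤ f x) ∧ h x ≤ 0)
    (hg : ∀ x, (∀ f ∈ s, 0 ≤ f x) → h x ≤ 0 → 0 ≤ g x) :
    ∃ μ ≥ (0 : 𝕜), ∀ x, (∀ f ∈ s, 0 ≤ f x) → 0 ≤ g x + μ * h x := by
  have hmem : g ∈ hull 𝕜 (insert (AffineMap.const 𝕜 P 1) (insert (-h) s)) :=
    mem_hull_insert_one_of_forall_nonneg (hs.insert _)
      (by simpa [and_comm] using hsat) (by simpa [and_imp, imp.swap] using hg)
  rw [Set.insert_comm, Submodule.mem_span_insert] at hmem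
  obtain ⟨μ, r, hr, rfl⟩ := hmem
  refine ⟨μ, μ.2, fun x hx ↦ ?_⟩
  have hrx : 0 ≤ r x := nonneg_of_mem_hull (by simpa using hx) hr
  have hcancel : (μ • -h + r) x + μ * h x = r x := by
    change (μ : 𝕜) * -h x + r x + μ * h x = r x
    ring
  exact hcancel ▸ hrx

theorem halfspace_rotation_general {ι : Type*} [Finite ι] (A : P →ᵃ[𝕜] ι → 𝕜) (b : ι → 𝕜)
    (g h : P →ᵃ[𝕜] 𝕜) (hnot : ¬ ∀ x, A x ≤ b → h x > 0)
    (hdisj : ∀ x, A x ≤ b → g x ≥ 0 ∨ h x > 0) :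
    ∃ μ ≥ (0 : 𝕜), ∀ x, A x ≤ b → g x + μ * h x ≥ 0 := by
  let slack (i : ι) : P →ᵃ[𝕜] 𝕜 := AffineMap.const 𝕜 P (b i) - (AffineMap.proj i).comp A
  have hslack (x : P) : (∀ f ∈ Set.range slack, 0 ≤ f x) ↔ A x ≤ b := by
    simp [slack, Pi.le_def]
  simp only [← hslack] at hnot hdisj ⊢
  push Not at hnot
  exact exists_nonneg_multiplier_of_finite (Set.finite_range slack) hnot
    fun x hx hhx ↦ (hdisj x hx).resolve_right hhx.not_gt

end AffineFarkas

end OrderedField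

/-- Half-space rotation lemma (Lemma 1). -/
theorem halfspace_rotation {m n : ℕ}
    (A : Matrix (Fin m) (Fin n) ℝ) (b : Fin m → ℝ)
    (g h : Fin n → ℝ) (g₀ h₀ : ℝ)
    (hsat : ∃ x, A.mulVec x ≤ b)
    (hnot : ¬ ∀ x, A.mulVec x ≤ b → h ⬝ᵥ x + h₀ > 0)
    (hdisj : ∀ x, A.mulVec x ≤ b → g ⬝ᵥ x + g₀ ≥ 0 ∨ h ⬝ᵥ x + h₀ > 0) :
    ∃ μ ≥ (0 : ℝ), ∀ x, A.mulVec x ≤ b →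
      (g ⬝ᵥ x + g₀) + μ * (h ⬝ᵥ x + h₀) ≥ 0 := by
  let affine (u : Fin n → ℝ) (r : ℝ) : (Fin n → ℝ) →ᵃ[ℝ] ℝ :=
    (dotProductBilin ℝ ℝ u).toAffineMap + AffineMap.const ℝ _ r
  exact halfspace_rotation_general A.mulVecLin.toAffineMap b (affine g g₀) (affine h h₀) hnot hdisj
end

section
/- Integral version of Farkas' Lemma (Lemma 2): Let A be a real m×n matrix and b ∈ ℝᵐ such that the system A·x ≤ b is satisfiable and integral, and let c ∈ ℝⁿ and δ ∈ ℝ. Then the following are equivalent: (1) for every x ∈ ℤⁿ with A·x ≤ b one has cᵀx ≤ δ; (2) there exists λ ∈ ℝᵐ with λ ≥ 0 (componentwise), λᵀA = cᵀ, and λᵀb ≤ δ. -/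
open Matrix

/-!
A half-space contains a set exactly when it contains its convex hull, so integrality reduces the
claim to the affine Farkas lemma. Homogenizing `a i x ≤ b i` to `a i x ≤ b i * t`, `0 ≤ t` turns
that into the conic Farkas lemma: a linear form which is nonnegative wherever finitely many given
forms are is a nonnegative combination of them. For this, remove one form `f`. If `c` can become
negative where the remaining forms are nonnegative, say `c y < 0`, then necessarily `f y < 0`, and
projecting along `y` onto the kernel of `f` leaves a problem with one form fewer, solved by some
combination `g`. Now `c - g` vanishes on that kernel, so it is a multiple of `f`, and evaluating at
`y` shows that the factor is nonnegative.
-/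

section Hull

lemma map_hull {R E F : Type*} [Semiring R] [PartialOrder R] [IsOrderedRing R] [AddCommMonoid E]
    [Module R E] [AddCommMonoid F] [Module R F] (f : E →ₗ[R] F) (s : Set E) :
    (PointedCone.hull R s).map f = PointedCone.hull R (f '' s) :=
  Submodule.map_span _ _

lemma apply_nonneg_of_mem_hull_s2 {R E : Type*} [CommRing R] [PartialOrder R] [IsOrderedRing R]
    [AddCommGroup E] [Module R E] {s : Set (Module.Dual R E)} {g : Module.Dual R E}
    (hg : g ∈ PointedCone.hull R s) {x : E} (hx : ∀ f ∈ s, 0 ≤ f x) : 0 ≤ g x := by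
  have hx_dual : x ∈ PointedCone.dual .id (PointedCone.hull R s : Set (Module.Dual R E)) := by
    rw [PointedCone.dual_hull]
    exact fun f hf ↦ hx f hf
  exact hx_dual hg

lemma forall_mem_convexHull_apply_le_iff {R E : Type*} [CommRing R] [PartialOrder R]
    [IsOrderedRing R] [AddCommGroup E] [Module R E] {S : Set E} {f : Module.Dual R E} {δ : R} :
    (∀ x ∈ convexHull R S, f x ≤ δ) ↔ ∀ x ∈ S, f x ≤ δ :=
  (convex_halfSpace_le f.isLinear δ).convexHull_subset_iff

end Hull

section Cone

variable {𝕜 V ι : Type*} [Field 𝕜] [AddCommGroup V] [Module 𝕜 V]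

/-- The projection of `V` onto the kernel of `f` along `y`, for a vector `y` with `f y ≠ 0`.
If `f y = 0`, it is the identity. -/
def projKer (f : Module.Dual 𝕜 V) (y : V) : V →ₗ[𝕜] V :=
  LinearMap.id - f.smulRight ((f y)⁻¹ • y)

lemma projKer_apply (f : Module.Dual 𝕜 V) (x y : V) :
    projKer f y x = x - (f x / f y) • y := by
  simp [projKer, smul_smul, div_eq_mul_inv]

lemma apply_projKer {f : Module.Dual 𝕜 V} {y : V} (hy : f y ≠ 0) (x : V) :
    f (projKer f y x) = 0 := by
  simp [projKer_apply, hy]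

lemma eq_add_smul_of_comp_projKer_eq {c f g : Module.Dual 𝕜 V} {y : V}
    (h : c ∘ₗ projKer f y = g ∘ₗ projKer f y) :
    c = g + ((c y - g y) / f y) • f := by
  ext x
  have hx : c (projKer f y x) = g (projKer f y x) := LinearMap.congr_fun h x
  simp only [projKer_apply, map_sub, map_smul, smul_eq_mul] at hx
  simp only [LinearMap.add_apply, LinearMap.smul_apply, smul_eq_mul]
  linear_combination hx

variable [LinearOrder 𝕜] [IsStrictOrderedRing 𝕜]

lemma mem_hull_insert_of_comp_projKer_eq {s : Set (Module.Dual 𝕜 V)} {c f g : Module.Dual 𝕜 V}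
    {y : V} (hg : g ∈ PointedCone.hull 𝕜 s) (hs : ∀ φ ∈ s, 0 ≤ φ y) (hc : c y < 0) (hf : f y < 0)
    (h : c ∘ₗ projKer f y = g ∘ₗ projKer f y) :
    c ∈ PointedCone.hull 𝕜 (insert f s) := by
  have hgy : 0 ≤ g y := apply_nonneg_of_mem_hull_s2 hg hs
  have hcoef : 0 ≤ (c y - g y) / f y := div_nonneg_of_nonpos (by linarith) hf.le
  rw [eq_add_smul_of_comp_projKer_eq h]
  exact add_mem (Submodule.span_mono (Set.subset_insert f s) hg)
    (PointedCone.smul_mem _ hcoef (PointedCone.subset_hull (Set.mem_insert f s)))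

theorem mem_hull_image_of_forall_nonneg_s2 (t : Finset ι) (a : ι → Module.Dual 𝕜 V)
    (c : Module.Dual 𝕜 V) (h : ∀ x, (∀ i ∈ t, 0 ≤ a i x) → 0 ≤ c x) :
    c ∈ PointedCone.hull 𝕜 (a '' t) := by
  classical
  induction t using Finset.induction_on generalizing a c with
  | empty =>
    have hc : c = 0 := by
      ext x
      have hneg : 0 ≤ c (-x) := h (-x) (by simp)
      rw [map_neg] at hneg
      exact le_antisymm (neg_nonneg.mp hneg) (h x (by simp))
    exact hc ▸ zero_mem _
  | insert j t _ ih =>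
    rw [Finset.coe_insert, Set.image_insert_eq]
    by_cases ht : ∀ x, (∀ i ∈ t, 0 ≤ a i x) → 0 ≤ c x
    · exact Submodule.span_mono (Set.subset_insert _ _) (ih a c ht)
    · push Not at ht
      obtain ⟨y, hty, hcy⟩ := ht
      have hjy : a j y < 0 := by
        by_contra! hjy
        exact hcy.not_ge (h y (Finset.forall_mem_insert _ _ _ |>.mpr ⟨hjy, hty⟩))
      set P := projKer (a j) y
      have hcP : c ∘ₗ P ∈ PointedCone.hull 𝕜 ((fun i ↦ P.dualMap (a i)) '' t) :=
        ih _ _ fun x hx ↦ h (P x) <|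
          Finset.forall_mem_insert _ _ _ |>.mpr ⟨(apply_projKer hjy.ne x).ge, hx⟩
      obtain ⟨g, hg, hgP⟩ : ∃ g ∈ PointedCone.hull 𝕜 (a '' t), g ∘ₗ P = c ∘ₗ P := by
        rwa [← Set.image_image P.dualMap a, ← map_hull, PointedCone.mem_map] at hcP
      exact mem_hull_insert_of_comp_projKer_eq hg (Set.forall_mem_image.mpr hty) hcy hjy hgP.symm

theorem exists_nonneg_sum_smul_eq_of_forall_nonneg [Fintype ι] (a : ι → Module.Dual 𝕜 V)
    (c : Module.Dual 𝕜 V) (h : ∀ x, (∀ i, 0 ≤ a i x) → 0 ≤ c x) :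
    ∃ l : ι → 𝕜, 0 ≤ l ∧ ∑ i, l i • a i = c := by
  have hc : c ∈ PointedCone.hull 𝕜 (Set.range a) := by
    simpa using mem_hull_image_of_forall_nonneg_s2 Finset.univ a c (by simpa using h)
  obtain ⟨l, hl⟩ := (Submodule.mem_span_range_iff_exists_fun _).mp hc
  exact ⟨fun i ↦ l i, fun i ↦ (l i).2, hl⟩

end Cone

section Affine

/-- The homogenization `(x, t) ↦ β * t - f x` of the slack of the affine inequality `f x ≤ β`. -/
def slackForm {R E : Type*} [CommRing R] [AddCommGroup E] [Module R E] (f : Module.Dual R E)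
    (β : R) : Module.Dual R (E × R) :=
  β • LinearMap.snd R E R - f ∘ₗ LinearMap.fst R E R

@[simp]
lemma slackForm_apply {R E : Type*} [CommRing R] [AddCommGroup E] [Module R E]
    (f : Module.Dual R E) (β : R) (p : E × R) : slackForm f β p = β * p.2 - f p.1 := rfl

variable {𝕜 V ι : Type*} [Field 𝕜] [LinearOrder 𝕜] [IsStrictOrderedRing 𝕜] [AddCommGroup V]
  [Module 𝕜 V]
  {a : ι → Module.Dual 𝕜 V} {b : ι → 𝕜} {c : Module.Dual 𝕜 V} {δ : 𝕜}

lemma apply_nonpos_of_forall_le {x₀ y : V} (hx₀ : ∀ i, a i x₀ ≤ b i)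
    (h : ∀ x, (∀ i, a i x ≤ b i) → c x ≤ δ) (hy : ∀ i, a i y ≤ 0) : c y ≤ 0 := by
  by_contra! hcy
  set s := (δ - c x₀ + 1) / c y
  have hs : 0 ≤ s := div_nonneg (by linarith [h x₀ hx₀]) hcy.le
  have hfeasible : ∀ i, a i (x₀ + s • y) ≤ b i := fun i ↦ by
    rw [map_add, map_smul, smul_eq_mul]
    linarith [hx₀ i, mul_nonpos_of_nonneg_of_nonpos hs (hy i)]
  have hle : c x₀ + s * c y ≤ δ := by simpa using h _ hfeasible
  have hsc : s * c y = δ - c x₀ + 1 := div_mul_cancel₀ _ hcy.ne'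
  linarith

lemma apply_le_mul_of_forall_le (hsat : ∃ x, ∀ i, a i x ≤ b i)
    (h : ∀ x, (∀ i, a i x ≤ b i) → c x ≤ δ) {x : V} {t : 𝕜} (ht : 0 ≤ t)
    (hx : ∀ i, a i x ≤ b i * t) : c x ≤ δ * t := by
  obtain ⟨x₀, hx₀⟩ := hsat
  rcases ht.eq_or_lt with rfl | ht
  · rw [mul_zero]
    exact apply_nonpos_of_forall_le hx₀ h (by simpa using hx)
  · have hscale (f : Module.Dual 𝕜 V) (β : 𝕜) : f (t⁻¹ • x) ≤ β ↔ f x ≤ β * t := by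
      rw [map_smul, smul_eq_mul, inv_mul_le_iff₀ ht, mul_comm]
    exact (hscale c δ).mp (h _ fun i ↦ (hscale (a i) (b i)).mpr (hx i))

theorem exists_nonneg_sum_smul_eq_and_sum_mul_le_of_forall_le [Fintype ι]
    (hsat : ∃ x, ∀ i, a i x ≤ b i) (h : ∀ x, (∀ i, a i x ≤ b i) → c x ≤ δ) :
    ∃ l : ι → 𝕜, 0 ≤ l ∧ ∑ i, l i • a i = c ∧ ∑ i, l i * b i ≤ δ := by
  obtain ⟨l, hl, hsum⟩ := exists_nonneg_sum_smul_eq_of_forall_nonneg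
    (fun o : Option ι ↦ o.elim (LinearMap.snd 𝕜 V 𝕜) fun i ↦ slackForm (a i) (b i))
    (slackForm c δ) fun p hp ↦ sub_nonneg.mpr <|
      apply_le_mul_of_forall_le hsat h (hp none) fun i ↦ sub_nonneg.mp (hp (some i))
  have hcomb (x : V) (t : 𝕜) :
      l none * t + ∑ i, l (some i) * (b i * t - a i x) = δ * t - c x := by
    simpa [Fintype.sum_option] using LinearMap.congr_fun hsum (x, t)
  refine ⟨fun i ↦ l (some i), fun i ↦ hl (some i), ?_, ?_⟩
  · ext x
    simpa using hcomb x 0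
  · have hconst : l none + ∑ i, l (some i) * b i = δ := by simpa using hcomb 0 1
    linarith [show 0 ≤ l none from hl none]

end Affine

section Polyhedron

variable {𝕜 m n : Type*} [Field 𝕜] [LinearOrder 𝕜] [IsStrictOrderedRing 𝕜] [Fintype m] [Fintype n]

theorem forall_dotProduct_le_iff_exists_vecMul_eq {A : Matrix m n 𝕜} {b : m → 𝕜} {c : n → 𝕜}
    {δ : 𝕜} (hsat : ∃ x, A *ᵥ x ≤ b) :
    (∀ x, A *ᵥ x ≤ b → c ⬝ᵥ x ≤ δ) ↔ ∃ l : m → 𝕜, 0 ≤ l ∧ l ᵥ* A = c ∧ l ⬝ᵥ b ≤ δ := by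
  constructor
  · intro h
    obtain ⟨l, hl, hsum, hle⟩ := exists_nonneg_sum_smul_eq_and_sum_mul_le_of_forall_le
      (a := fun i ↦ dotProductBilin 𝕜 𝕜 (A i)) (c := dotProductBilin 𝕜 𝕜 c) hsat h
    refine ⟨l, hl, dotProduct_eq _ _ fun x ↦ ?_, hle⟩
    calc l ᵥ* A ⬝ᵥ x = l ⬝ᵥ A *ᵥ x := (dotProduct_mulVec l A x).symm
      _ = c ⬝ᵥ x := by simpa [dotProduct, mulVec] using LinearMap.congr_fun hsum x
  · rintro ⟨l, hl, rfl, hle⟩ x hx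
    calc l ᵥ* A ⬝ᵥ x = l ⬝ᵥ A *ᵥ x := (dotProduct_mulVec l A x).symm
      _ ≤ l ⬝ᵥ b := dotProduct_le_dotProduct_of_nonneg_left hx hl
      _ ≤ δ := hle

theorem integral_farkas_general (A : Matrix m n 𝕜) (b : m → 𝕜) (c : n → 𝕜) (δ : 𝕜)
    {S : Set (n → 𝕜)} (hsat : ∃ x, A *ᵥ x ≤ b) (hS : {x | A *ᵥ x ≤ b} = convexHull 𝕜 S) :
    (∀ x ∈ S, c ⬝ᵥ x ≤ δ) ↔ ∃ l : m → 𝕜, 0 ≤ l ∧ l ᵥ* A = c ∧ l ⬝ᵥ b ≤ δ := by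
  have hhull : (∀ x ∈ convexHull 𝕜 S, c ⬝ᵥ x ≤ δ) ↔ ∀ x ∈ S, c ⬝ᵥ x ≤ δ :=
    forall_mem_convexHull_apply_le_iff (f := dotProductBilin 𝕜 𝕜 c)
  rw [← hhull, ← hS]
  exact forall_dotProduct_le_iff_exists_vecMul_eq hsat

end Polyhedron

/-- Integral version of Farkas' Lemma (Lemma 2). -/
theorem integral_farkas {m n : ℕ}
    (A : Matrix (Fin m) (Fin n) ℝ) (b : Fin m → ℝ) (c : Fin n → ℝ) (δ : ℝ)
    (hsat : ∃ x, A.mulVec x ≤ b)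
    (hintegral : {x : Fin n → ℝ | A.mulVec x ≤ b} =
      convexHull ℝ ((fun z : Fin n → ℤ => fun i => (z i : ℝ)) ''
        {z : Fin n → ℤ | A.mulVec (fun i => (z i : ℝ)) ≤ b})) :
    (∀ z : Fin n → ℤ, A.mulVec (fun i => (z i : ℝ)) ≤ b →
        c ⬝ᵥ (fun i => (z i : ℝ)) ≤ δ) ↔
      ∃ lam : Fin m → ℝ, 0 ≤ lam ∧ Matrix.vecMul lam A = c ∧ lam ⬝ᵥ b ≤ δ :=
  Set.forall_mem_image.symm.trans (integral_farkas_general A b c δ hsat hintegral)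
end
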